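/- For every integer d ≥ 4, the number of equivalence classes of d-dimensional extremal (0,1)-matrices of order 2 is at most 2^{d(d−3)}. -/

import Mathlib

open Finset

/-- The sum of the entries of `k` over the hyperplane `Γ_{i,j}`. -/
def hypSum {d n : ℕ} (k : (Fin d → Fin n) → ℝ) (i : Fin d) (j : Fin n) : ℝ :=
  ∑ α ∈ Finset.univ.filter (fun α : Fin d → Fin n => α i = j), k α

/-- `k` is a polyplex of weight `W` in the `d`-dimensional (0,1)-matrix `A` of order `n`. -/
def IsPolyplex {d n : ℕ} (A : (Fin d → Fin n) → Bool) (k : (Fin d → Fin n) → ℝ) (W : ℝ) : Prop :=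
  (∀ α, 0 ≤ k α) ∧ (∀ α, A α = false → k α = 0) ∧
  (∀ i j, hypSum k i j ≤ 1) ∧ (∑ α, k α) = W

/-- `k` is a polydiagonal in `A`: a nonnegative weighting of the support whose sum over
every hyperplane equals `1`. -/
def IsPolydiagonal {d n : ℕ} (A : (Fin d → Fin n) → Bool) (k : (Fin d → Fin n) → ℝ) : Prop :=
  (∀ α, 0 ≤ k α) ∧ (∀ α, A α = false → k α = 0) ∧ (∀ i j, hypSum k i j = 1)

def HasPolydiagonal {d n : ℕ} (A : (Fin d → Fin n) → Bool) : Prop :=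
  ∃ k, IsPolydiagonal A k

/-- The matrix obtained from `A` by additionally setting the entry at `β` to `1`. -/
def addEntry {d n : ℕ} (A : (Fin d → Fin n) → Bool) (β : Fin d → Fin n) :
    (Fin d → Fin n) → Bool :=
  fun α => if α = β then true else A α

/-- `A` is extremal: it has no polydiagonal, and adding any entry creates one. -/
def IsExtremal {d n : ℕ} (A : (Fin d → Fin n) → Bool) : Prop :=
  ¬ HasPolydiagonal A ∧ ∀ β, A β = false → HasPolydiagonal (addEntry A β)

/-- `Λ` is a hyperplane cover of `A`. -/
def IsCover {d n : ℕ} (A : (Fin d → Fin n) → Bool) (Λ : Fin d → Fin n → ℝ) : Prop :=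
  (∀ i j, 0 ≤ Λ i j) ∧ ∀ α, A α = true → 1 ≤ ∑ i, Λ i (α i)

/-- The weight of a hyperplane cover. -/
def coverWeight {d n : ℕ} (Λ : Fin d → Fin n → ℝ) : ℝ := ∑ i, ∑ j, Λ i j

/-- `Λ` is an optimal hyperplane cover of `A`: a cover of minimum weight. -/
def IsOptimalCover {d n : ℕ} (A : (Fin d → Fin n) → Bool) (Λ : Fin d → Fin n → ℝ) : Prop :=
  IsCover A Λ ∧ ∀ Λ', IsCover A Λ' → coverWeight Λ ≤ coverWeight Λ'

/-- `A` is a threshold matrix. -/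
def IsThreshold {d n : ℕ} (A : (Fin d → Fin n) → Bool) : Prop :=
  ∃ Λ : Fin d → Fin n → ℝ, (∀ i j, 0 ≤ Λ i j) ∧
    ∀ α, (A α = true ↔ 1 ≤ ∑ i, Λ i (α i))

/-- `A` and `B` are equivalent: `B` is obtained from `A` by permuting directions and
permuting parallel hyperplanes, i.e. `B(α) = A(β)` where `β (π i) = σ i (α i)`. -/
def MatEquiv {d n : ℕ} (A B : (Fin d → Fin n) → Bool) : Prop :=
  ∃ (π : Equiv.Perm (Fin d)) (σ : Fin d → Equiv.Perm (Fin n)),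
    ∀ α, B α = A (fun j => σ (π.symm j) (α (π.symm j)))

/-- The rate of the hyperplane `Γ_{i,j}` of `A`: the number of ones it contains. -/
def rate {d n : ℕ} (A : (Fin d → Fin n) → Bool) (i : Fin d) (j : Fin n) : ℕ :=
  (Finset.univ.filter (fun α : Fin d → Fin n => A α = true ∧ α i = j)).card

/-- The profile of `A`: the multiset of the rates of all its `d·n` hyperplanes. -/
def profile {d n : ℕ} (A : (Fin d → Fin n) → Bool) : Multiset ℕ :=
  (Finset.univ : Finset (Fin d × Fin n)).val.map (fun p => rate A p.1 p.2)


lemma exists_perm_of_map_eq {T U : Type} [Fintype T] [DecidableEq U] (f g : T → U)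
    (h : (Finset.univ : Finset T).val.map f = (Finset.univ : Finset T).val.map g) :
    ∃ π : Equiv.Perm T, f = g ∘ π := by
  have hc : ∀ y, Fintype.card {x // f x = y} = Fintype.card {x // g x = y} := by
    intro y
    have h1 := congrArg (Multiset.count y) h
    rw [Multiset.count_map, Multiset.count_map] at h1
    rw [Fintype.card_subtype, Fintype.card_subtype]
    simpa [Finset.card, Finset.filter_val, eq_comm] using h1
  refine ⟨Equiv.ofFiberEquiv (fun y => Fintype.equivOfCardEq (hc y)), ?_⟩
  funext x
  exact (Equiv.ofFiberEquiv_map _ x).symm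

lemma rev_eq_iff (x j : Fin 2) : Fin.rev x = j ↔ x = Fin.rev j := by
  revert x j; decide

lemma ne_iff_rev (x j : Fin 2) : ¬ x = j ↔ x = Fin.rev j := by
  revert x j; decide

/-- The antipodal index. -/
def anti {d : ℕ} (α : Fin d → Fin 2) : Fin d → Fin 2 := fun i => Fin.rev (α i)

lemma anti_anti {d : ℕ} (α : Fin d → Fin 2) : anti (anti α) = α := by
  funext i; simp [anti]

/-- The antipodal map as a permutation. -/
def antiEquiv (d : ℕ) : Equiv.Perm (Fin d → Fin 2) :=
  ⟨anti, anti, anti_anti, anti_anti⟩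

lemma anti_ne {d : ℕ} (hd : 0 < d) (α : Fin d → Fin 2) : anti α ≠ α := by
  intro h
  have h1 := congrFun h ⟨0, hd⟩
  simp only [anti] at h1
  generalize α ⟨0, hd⟩ = x at h1
  revert h1; revert x; decide

/-- Point mass. -/
noncomputable def pm {d : ℕ} (β : Fin d → Fin 2) : (Fin d → Fin 2) → ℝ :=
  fun γ => if γ = β then 1 else 0

lemma hypSum_pm {d : ℕ} (β : Fin d → Fin 2) (i : Fin d) (j : Fin 2) :
    hypSum (pm β) i j = if β i = j then 1 else 0 := by
  simp [hypSum, pm, Finset.sum_ite_eq']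

lemma hypSum_pm_anti {d : ℕ} (β : Fin d → Fin 2) (i : Fin d) (j : Fin 2) :
    hypSum (pm β) i j + hypSum (pm (anti β)) i j = 1 := by
  rw [hypSum_pm, hypSum_pm]
  simp only [anti, rev_eq_iff, ← ne_iff_rev]
  split_ifs <;> norm_num

lemma hypSum_comb {d : ℕ} (f g h l : (Fin d → Fin 2) → ℝ) (a b c e : ℝ)
    (i : Fin d) (j : Fin 2) :
    hypSum (fun γ => (b * f γ + a * g γ - c * (h γ + l γ)) / e) i j
      = (b * hypSum f i j + a * hypSum g i j - c * (hypSum h i j + hypSum l i j)) / e := by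
  simp only [hypSum, Finset.mul_sum, ← Finset.sum_add_distrib, ← Finset.sum_sub_distrib,
    Finset.sum_div]

/-- The support contains exactly one index of each antipodal pair. -/
def Halving {d : ℕ} (A : (Fin d → Fin 2) → Bool) : Prop := ∀ α, A (anti α) = !A α

lemma not_both {d : ℕ} (A : (Fin d → Fin 2) → Bool) (hA : ¬ HasPolydiagonal A)
    (β : Fin d → Fin 2) (h1 : A β = true) (h2 : A (anti β) = true) : False := by
  apply hA
  refine ⟨fun γ => pm β γ + pm (anti β) γ, ?_, ?_, ?_⟩
  · intro γ; simp only [pm]; split_ifs <;> norm_num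
  · intro γ hγ
    have e1 : γ ≠ β := by rintro rfl; simp_all
    have e2 : γ ≠ anti β := by rintro rfl; simp_all
    simp [pm, e1, e2]
  · intro i j
    rw [← hypSum_pm_anti β i j]
    simp [hypSum, Finset.sum_add_distrib]

lemma le_one_of_hyp {d : ℕ} (hd : 0 < d) (k : (Fin d → Fin 2) → ℝ) (h0 : ∀ α, 0 ≤ k α)
    (h : ∀ i j, hypSum k i j = 1) (β : Fin d → Fin 2) : k β ≤ 1 := by
  rw [← h ⟨0, hd⟩ (β ⟨0, hd⟩)]
  exact Finset.single_le_sum (f := k) (fun x _ => h0 x) (by simp)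

lemma pos_of_add {d : ℕ} (A : (Fin d → Fin 2) → Bool) (hA : ¬ HasPolydiagonal A)
    (β : Fin d → Fin 2) (k : (Fin d → Fin 2) → ℝ)
    (hk : IsPolydiagonal (addEntry A β) k) : 0 < k β := by
  obtain ⟨h0, h1, h2⟩ := hk
  refine lt_of_le_of_ne (h0 β) fun h => hA ⟨k, h0, fun α hα => ?_, h2⟩
  by_cases e : α = β
  · rw [e, ← h]
  · exact h1 α (by simp [addEntry, e, hα])

lemma not_neither {d : ℕ} (hd : 0 < d) (A : (Fin d → Fin 2) → Bool) (hA : IsExtremal A)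
    (β : Fin d → Fin 2) (h1 : A β = false) (h2 : A (anti β) = false) : False := by
  obtain ⟨k, hk⟩ := hA.2 _ h1
  obtain ⟨l, hl⟩ := hA.2 _ h2
  have ha := pos_of_add A hA.1 _ k hk
  have hb := pos_of_add A hA.1 _ l hl
  obtain ⟨k0, k1, k2⟩ := hk
  obtain ⟨l0, l1, l2⟩ := hl
  have hb1 := le_one_of_hyp hd l l0 l2 (anti β)
  have hne := anti_ne hd β
  have kz : k (anti β) = 0 := k1 _ (by simp [addEntry, hne, h2])
  have lz : l β = 0 := l1 _ (by simp [addEntry, hne.symm, h1])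
  apply hA.1
  set a := k β with hadef
  set b := l (anti β) with hbdef
  have hpos : 0 < b + a - a * b := by nlinarith
  refine ⟨fun γ => (b * k γ + a * l γ - (a * b) * (pm β γ + pm (anti β) γ)) / (b + a - a * b),
    ?_, ?_, ?_⟩
  · intro γ
    apply div_nonneg _ hpos.le
    by_cases e1 : γ = β
    · subst e1
      simp only [pm, hne.symm, lz, ← hadef]; simp; linarith
    · by_cases e2 : γ = anti β
      · subst e2
        simp only [pm, hne, kz, ← hbdef]; simp
      · simp only [pm, e1, e2]
        have := k0 γ
        have := l0 γ
        simp; positivity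
  · intro γ hγ
    by_cases e1 : γ = β
    · subst e1
      simp only [pm, hne.symm, lz, ← hadef]; simp; left; ring
    · by_cases e2 : γ = anti β
      · subst e2
        simp only [pm, hne, kz, ← hbdef]; simp
      · simp only [pm, e1, e2]
        rw [k1 γ (by simp [addEntry, e1, hγ]), l1 γ (by simp [addEntry, e2, hγ])]
        simp
  · intro i j
    rw [hypSum_comb, hypSum_pm_anti, k2, l2]
    rw [mul_one, mul_one, mul_one, div_self hpos.ne']

lemma halving_of_extremal {d : ℕ} (hd : 0 < d) (A : (Fin d → Fin 2) → Bool)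
    (hA : IsExtremal A) : Halving A := by
  intro α
  cases h1 : A α <;> cases h2 : A (anti α)
  · exact (not_neither hd A hA α h1 h2).elim
  · rfl
  · rfl
  · exact (not_both A hA.1 α h1 h2).elim

lemma card_filter_perm {T : Type*} [Fintype T] (e : Equiv.Perm T) (P : T → Prop)
    [DecidablePred P] :
    (Finset.univ.filter (fun x => P (e x))).card = (Finset.univ.filter P).card := by
  apply Finset.card_equiv e
  simp

lemma card_anti {d : ℕ} (P : (Fin d → Fin 2) → Prop) [DecidablePred P] :
    (Finset.univ.filter (fun x => P (anti x))).card = (Finset.univ.filter P).card :=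
  card_filter_perm (antiEquiv d) P

/-- Two halving matrices with equal rates agree if one has no polydiagonal. -/
lemma eq_of_rate {d : ℕ} (A B : (Fin d → Fin 2) → Bool)
    (hA : Halving A) (hB : Halving B) (hn : ¬ HasPolydiagonal A)
    (hr : ∀ i j, rate A i j = rate B i j) : A = B := by
  by_contra hne
  apply hn
  -- the difference set
  set S := Finset.univ.filter (fun α => A α = true ∧ B α = false) with hS
  have hex : S.Nonempty := by
    obtain ⟨α, hα⟩ := Function.ne_iff.1 hne
    cases h1 : A α <;> cases h2 : B α
    · simp_all
    · refine ⟨anti α, ?_⟩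
      simp [hS, hA α, hB α, h1, h2]
    · exact ⟨α, by simp [hS, h1, h2]⟩
    · simp_all
  have hSn : (0 : ℝ) < S.card := by exact_mod_cast hex.card_pos
  -- balanced
  have hbal : ∀ i j, (S.filter (fun α => α i = j)).card
      = (S.filter (fun α => α i = Fin.rev j)).card := by
    intro i j
    have e1 : (S.filter (fun α => α i = Fin.rev j)).card
        = (Finset.univ.filter (fun α : Fin d → Fin 2 =>
            (A α = false ∧ B α = true) ∧ α i = j)).card := by
      rw [← card_anti, hS, Finset.filter_filter]
      congr 1
      ext α
      simp [hA α, hB α, anti, rev_eq_iff]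
    have e2 : rate A i j = (Finset.univ.filter (fun α : Fin d → Fin 2 =>
            (A α = true ∧ B α = true) ∧ α i = j)).card + (S.filter (fun α => α i = j)).card := by
      rw [hS, Finset.filter_filter, ← Finset.card_union_of_disjoint]
      · rw [rate]
        congr 1
        ext α
        simp only [Finset.mem_filter, Finset.mem_univ, true_and, Finset.mem_union]
        cases A α <;> cases B α <;> simp
      · rw [Finset.disjoint_filter]
        rintro α - ⟨⟨_, h1⟩, _⟩ ⟨⟨_, h2⟩, _⟩
        simp_all
    have e3 : rate B i j = (Finset.univ.filter (fun α : Fin d → Fin 2 =>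
            (A α = true ∧ B α = true) ∧ α i = j)).card + (Finset.univ.filter (fun α : Fin d → Fin 2 =>
            (A α = false ∧ B α = true) ∧ α i = j)).card := by
      rw [← Finset.card_union_of_disjoint]
      · rw [rate]
        congr 1
        ext α
        simp only [Finset.mem_filter, Finset.mem_univ, true_and, Finset.mem_union]
        cases A α <;> cases B α <;> simp
      · rw [Finset.disjoint_filter]
        rintro α - ⟨⟨h1, _⟩, _⟩ ⟨⟨h2, _⟩, _⟩
        simp_all
    have := hr i j
    omega
  have hhalf : ∀ i j, 2 * (S.filter (fun α => α i = j)).card = S.card := by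
    intro i j
    have h1 := Finset.card_filter_add_card_filter_not (s := S) (fun α => α i = j)
    have h2 := hbal i j
    simp only [ne_iff_rev] at h1
    omega
  refine ⟨fun γ => if γ ∈ S then 2 / (S.card : ℝ) else 0, ?_, ?_, ?_⟩
  · intro γ
    dsimp only
    split_ifs
    · exact (div_pos two_pos hSn).le
    · exact le_rfl
  · intro γ hγ
    simp [hS, hγ]
  · intro i j
    have h := hhalf i j
    have h' : (2 : ℝ) * ((S.filter (fun α => α i = j)).card : ℝ) = S.card := by exact_mod_cast h
    have e : (Finset.univ.filter (fun α : Fin d → Fin 2 => α i = j)).filter (fun γ => γ ∈ S)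
        = S.filter (fun α => α i = j) := by
      ext α
      simp [and_comm]
    rw [hypSum, ← Finset.sum_filter, e, Finset.sum_const, nsmul_eq_mul]
    rw [mul_div_assoc', mul_comm, h', div_self hSn.ne']

lemma card_hyp {d : ℕ} (hd : 0 < d) (i : Fin d) (j : Fin 2) :
    (Finset.univ.filter (fun α : Fin d → Fin 2 => α i = j)).card = 2 ^ (d - 1) := by
  have h1 := Finset.card_filter_add_card_filter_not
    (s := (Finset.univ : Finset (Fin d → Fin 2))) (fun α => α i = j)
  have h2 := card_anti (fun α : Fin d → Fin 2 => α i = j)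
  simp only [ne_iff_rev] at h1
  simp only [anti, rev_eq_iff] at h2
  rw [h2] at h1
  simp at h1
  obtain ⟨e, rfl⟩ : ∃ e, d = e + 1 := ⟨d - 1, by omega⟩
  rw [pow_succ] at h1
  simp
  omega

lemma rate_add {d : ℕ} (hd : 0 < d) (A : (Fin d → Fin 2) → Bool) (hA : Halving A)
    (i : Fin d) (j : Fin 2) : rate A i j + rate A i (Fin.rev j) = 2 ^ (d - 1) := by
  have h1 := card_anti (fun α : Fin d → Fin 2 => A α = true ∧ α i = Fin.rev j)
  have h2 := Finset.card_filter_add_card_filter_not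
    (s := Finset.univ.filter (fun α : Fin d → Fin 2 => α i = j)) (fun α => A α = true)
  rw [card_hyp hd, Finset.filter_filter, Finset.filter_filter] at h2
  rw [← h2, rate, rate, ← h1]
  congr 2
  · ext α; simp [and_comm]
  · ext α; simp [hA α, anti, and_comm]

lemma rate_le {d : ℕ} (hd : 0 < d) (A : (Fin d → Fin 2) → Bool) (hA : Halving A)
    (i : Fin d) (j : Fin 2) : rate A i j ≤ 2 ^ (d - 1) := by
  have := rate_add hd A hA i j
  omega

/-- Flip of a coordinate. -/
def flipAt {d : ℕ} (i : Fin d) (α : Fin d → Fin 2) : Fin d → Fin 2 :=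
  Function.update α i (Fin.rev (α i))

/-- Flip of a coordinate as a permutation. -/
def flipEquiv {d : ℕ} (i : Fin d) : Equiv.Perm (Fin d → Fin 2) :=
  ⟨flipAt i, flipAt i, fun α => by simp [flipAt], fun α => by simp [flipAt]⟩

lemma card_diff {d : ℕ} (i i' : Fin d) (hne : i ≠ i') :
    2 * (Finset.univ.filter (fun α : Fin d → Fin 2 => α i ≠ α i')).card = 2 ^ d := by
  have h1 := Finset.card_filter_add_card_filter_not
    (s := (Finset.univ : Finset (Fin d → Fin 2))) (fun α => α i ≠ α i')
  have h2 := card_filter_perm (flipEquiv i) (fun α : Fin d → Fin 2 => α i ≠ α i')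
  have h3 : (Finset.univ.filter (fun x : Fin d → Fin 2 => flipEquiv i x i ≠ flipEquiv i x i'))
      = (Finset.univ.filter (fun α : Fin d → Fin 2 => ¬ α i ≠ α i')) := by
    ext α
    simp only [Finset.mem_filter, Finset.mem_univ, true_and, flipEquiv, flipAt, Equiv.coe_fn_mk,
      Function.update_self, Function.update_of_ne hne.symm]
    generalize α i = x
    generalize α i' = y
    revert x y; decide
  rw [h3] at h2
  rw [h2] at h1
  simp only [Finset.card_univ, Fintype.card_fun, Fintype.card_fin] at h1
  omega

lemma rate_parity {d : ℕ} (hd : 3 ≤ d) (A : (Fin d → Fin 2) → Bool) (hA : Halving A)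
    (i i' : Fin d) (j : Fin 2) : rate A i j % 2 = rate A i' j % 2 := by
  by_cases hne : i = i'
  · rw [hne]
  have h0 := card_diff i i' hne
  have h1 := card_anti (fun α : Fin d → Fin 2 => A α = true ∧ α i ≠ α i')
  have h2 := Finset.card_filter_add_card_filter_not
    (s := Finset.univ.filter (fun α : Fin d → Fin 2 => α i ≠ α i')) (fun α => A α = true)
  rw [Finset.filter_filter, Finset.filter_filter] at h2
  have h3 : (Finset.univ.filter (fun α : Fin d → Fin 2 => α i ≠ α i' ∧ A α = true)).card
      = (Finset.univ.filter (fun α : Fin d → Fin 2 => A α = true ∧ α i ≠ α i')).card := by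
    congr 1; ext α; simp [and_comm]
  have h4 : (Finset.univ.filter (fun α : Fin d → Fin 2 => α i ≠ α i' ∧ ¬ A α = true)).card
      = (Finset.univ.filter (fun α : Fin d → Fin 2 => A α = true ∧ α i ≠ α i')).card := by
    rw [← h1]
    congr 1; ext α; simp [hA α, anti, and_comm]
  -- splitting of the rates
  have s1 := Finset.card_filter_add_card_filter_not
    (s := Finset.univ.filter (fun α : Fin d → Fin 2 => A α = true ∧ α i = j)) (fun α => α i' = j)
  have s2 := Finset.card_filter_add_card_filter_not
    (s := Finset.univ.filter (fun α : Fin d → Fin 2 => A α = true ∧ α i' = j)) (fun α => α i = j)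
  have s3 := Finset.card_filter_add_card_filter_not
    (s := Finset.univ.filter (fun α : Fin d → Fin 2 => A α = true ∧ α i ≠ α i')) (fun α => α i = j)
  rw [Finset.filter_filter, Finset.filter_filter] at s1 s2 s3
  have t1 : (Finset.univ.filter (fun α : Fin d → Fin 2 => (A α = true ∧ α i' = j) ∧ α i = j))
      = (Finset.univ.filter (fun α : Fin d → Fin 2 => (A α = true ∧ α i = j) ∧ α i' = j)) := by
    ext α; simp; tauto
  have t2 : (Finset.univ.filter (fun α : Fin d → Fin 2 => (A α = true ∧ α i ≠ α i') ∧ α i = j))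
      = (Finset.univ.filter (fun α : Fin d → Fin 2 => (A α = true ∧ α i = j) ∧ ¬ α i' = j)) := by
    ext α
    simp only [Finset.mem_filter, Finset.mem_univ, true_and]
    grind
  have t3 : (Finset.univ.filter (fun α : Fin d → Fin 2 => (A α = true ∧ α i ≠ α i') ∧ ¬ α i = j))
      = (Finset.univ.filter (fun α : Fin d → Fin 2 => (A α = true ∧ α i' = j) ∧ ¬ α i = j)) := by
    ext α
    simp only [Finset.mem_filter, Finset.mem_univ, true_and]
    generalize α i = x
    generalize α i' = y
    generalize A α = b
    have hd3 : ∀ (x y j : Fin 2) (b : Bool),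
        (b = true ∧ x ≠ y) ∧ ¬x = j ↔ (b = true ∧ y = j) ∧ ¬x = j := by decide
    exact hd3 x y j b
  rw [t1] at s2
  rw [t2, t3] at s3
  obtain ⟨e, rfl⟩ : ∃ e, d = e + 3 := ⟨d - 3, by omega⟩
  rw [pow_add] at h0
  unfold rate
  omega

/-- The larger rate in direction `i`. -/
def maxRate {d : ℕ} (A : (Fin d → Fin 2) → Bool) (i : Fin d) : ℕ :=
  max (rate A i 0) (rate A i 1)

lemma rate_add' {d : ℕ} (hd : 0 < d) (A : (Fin d → Fin 2) → Bool) (hA : Halving A)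
    (i : Fin d) : rate A i 0 + rate A i 1 = 2 ^ (d - 1) := rate_add hd A hA i 0

lemma maxRate_parity {d : ℕ} (hd : 3 ≤ d) (A : (Fin d → Fin 2) → Bool) (hA : Halving A)
    (i i' : Fin d) : maxRate A i % 2 = maxRate A i' % 2 := by
  have h0 := rate_parity hd A hA i i' 0
  have h1 := rate_parity hd A hA i i' 1
  have h2 := rate_add' (by omega) A hA i
  have h3 := rate_add' (by omega) A hA i'
  obtain ⟨e, rfl⟩ : ∃ e, d = e + 3 := ⟨d - 3, by omega⟩
  have h4 : 2 ^ (e + 3 - 1) = 2 ^ (e + 1) * 2 := by rw [← pow_succ]; rfl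
  rw [h4] at h2 h3
  unfold maxRate
  omega

/-- Matrices with the same larger rates up to permutation are equivalent. -/
lemma equiv_of_maxRate {d : ℕ} (hd : 0 < d) (A B : (Fin d → Fin 2) → Bool)
    (hA : Halving A) (hB : Halving B) (hn : ¬ HasPolydiagonal B)
    (π : Equiv.Perm (Fin d)) (h : ∀ i, maxRate A (π i) = maxRate B i) : MatEquiv A B := by
  have hσ : ∀ i, ∃ s : Equiv.Perm (Fin 2), ∀ j, rate A (π i) (s j) = rate B i j := by
    intro i
    have h1 := rate_add' hd A hA (π i)
    have h2 := rate_add' hd B hB i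
    have h3 := h i
    unfold maxRate at h3
    by_cases hc : rate A (π i) 0 = rate B i 0
    · refine ⟨1, fun j => ?_⟩
      fin_cases j
      · simpa using hc
      · simp; omega
    · refine ⟨Equiv.swap 0 1, fun j => ?_⟩
      fin_cases j
      · simp; omega
      · simp; omega
  choose σ hσ using hσ
  refine ⟨π, σ, ?_⟩
  set T : (Fin d → Fin 2) → (Fin d → Fin 2) :=
    fun α j => σ (π.symm j) (α (π.symm j)) with hT
  let Te : Equiv.Perm (Fin d → Fin 2) :=
    ⟨T, fun β i => (σ i).symm (β (π i)), fun α => by funext i; simp [hT],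
      fun β => by funext i; simp [hT]⟩
  have hper : ∀ (s : Equiv.Perm (Fin 2)) (x : Fin 2), s (Fin.rev x) = Fin.rev (s x) := by
    decide
  have key : B = fun α => A (T α) := by
    apply eq_of_rate B _ hB _ hn
    · intro i j
      rw [← hσ i j]
      unfold rate
      rw [← card_filter_perm Te]
      congr 1
      ext α
      simp [Te, hT]
    · intro α
      rw [← hA (T α)]
      change A (T (anti α)) = A (anti (T α))
      congr 1
      funext i
      simp [hT, anti, hper]
  intro α
  exact congrFun key α

lemma dictator_of_rate {d : ℕ} (hd : 0 < d) (A : (Fin d → Fin 2) → Bool) (hA : Halving A)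
    (i : Fin d) (j : Fin 2) (h : rate A i j = 2 ^ (d - 1)) :
    ∀ α, A α = true ↔ α i = j := by
  have h1 : Finset.univ.filter (fun α : Fin d → Fin 2 => A α = true ∧ α i = j)
      = Finset.univ.filter (fun α : Fin d → Fin 2 => α i = j) := by
    apply Finset.eq_of_subset_of_card_le
    · intro α; simp
    · rw [card_hyp hd, ← h, rate]
  have h2 : ∀ α : Fin d → Fin 2, α i = j → A α = true := by
    intro α hα
    have : α ∈ Finset.univ.filter (fun α : Fin d → Fin 2 => A α = true ∧ α i = j) := by
      rw [h1]; simpa using hα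
    simp at this
    exact this.1
  intro α
  refine ⟨fun h => ?_, h2 α⟩
  by_contra hc
  have := h2 (anti α) (by rw [ne_iff_rev] at hc; simp [anti, hc])
  rw [hA, h] at this
  simp at this

lemma equiv_of_dictator {d : ℕ} (A B : (Fin d → Fin 2) → Bool) (i i' : Fin d) (j j' : Fin 2)
    (hA : ∀ α, A α = true ↔ α i = j) (hB : ∀ α, B α = true ↔ α i' = j') : MatEquiv A B := by
  refine ⟨Equiv.swap i i', fun _ => Equiv.swap j j', fun α => ?_⟩
  rw [Bool.eq_iff_iff, hA, hB]
  simp only [Equiv.symm_swap, Equiv.swap_apply_left]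
  rw [← Equiv.eq_symm_apply]
  simp

lemma exists_dictator {d : ℕ} (hd : 0 < d) (A : (Fin d → Fin 2) → Bool) (hA : Halving A)
    (i : Fin d) (h : maxRate A i = 2 ^ (d - 1)) : ∃ j, ∀ α, A α = true ↔ α i = j := by
  rcases max_choice (rate A i 0) (rate A i 1) with h' | h'
  · exact ⟨0, dictator_of_rate hd A hA i 0 (by rw [← h, maxRate, h'])⟩
  · exact ⟨1, dictator_of_rate hd A hA i 1 (by rw [← h, maxRate, h'])⟩

lemma code_lt {d : ℕ} (hd : 4 ≤ d) (A : (Fin d → Fin 2) → Bool) (hA : Halving A)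
    (h : ¬ ∃ i, maxRate A i = 2 ^ (d - 1)) (i : Fin d) :
    (maxRate A i - 2 ^ (d - 2)) / 2 < 2 ^ (d - 3) ∧ 2 ^ (d - 2) ≤ maxRate A i := by
  have h1 := rate_add' (by omega) A hA i
  have h2 : maxRate A i ≠ 2 ^ (d - 1) := fun e => h ⟨i, e⟩
  obtain ⟨e, rfl⟩ : ∃ e, d = e + 3 := ⟨d - 3, by omega⟩
  have e1 : e + 3 - 1 = e + 2 := rfl
  have e2 : e + 3 - 2 = e + 1 := rfl
  have e3 : e + 3 - 3 = e := rfl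
  rw [e1] at h1 h2
  rw [e2, e3]
  rw [pow_succ, pow_succ] at h1 h2
  rw [pow_succ]
  unfold maxRate at *
  omega

lemma multichoose_step (m n : ℕ) (hm : 1 ≤ m) :
    Nat.multichoose m (n + 1) ≤ m * Nat.multichoose m n := by
  obtain ⟨m, rfl⟩ : ∃ e, m = e + 1 := ⟨m - 1, by omega⟩
  have h : (n + 1) * Nat.multichoose (m + 1) (n + 1) = (m + 1 + n) * Nat.multichoose (m + 1) n := by
    rw [Nat.multichoose_eq, Nat.multichoose_eq]
    have := Nat.add_one_mul_choose_eq (m + n) n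
    have e1 : m + 1 + (n + 1) - 1 = m + n + 1 := by omega
    have e2 : m + 1 + n - 1 = m + n := by omega
    rw [e1, e2]
    linarith
  have h2 : (m + 1 + n) * Nat.multichoose (m + 1) n
      ≤ (n + 1) * ((m + 1) * Nat.multichoose (m + 1) n) := by
    rw [← mul_assoc]
    apply Nat.mul_le_mul_right
    nlinarith
  rw [← h] at h2
  exact Nat.le_of_mul_le_mul_left h2 (by omega)

lemma multichoose_bound (m n : ℕ) (hm : 2 ≤ m) :
    2 * Nat.multichoose m (n + 4) + 1 ≤ m ^ (n + 4) := by
  induction n with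
  | zero =>
    have h : 24 * Nat.multichoose m 4 = m * (m + 1) * (m + 2) * (m + 3) := by
      have := Nat.ascFactorial_eq_factorial_mul_choose' m 4
      rw [Nat.multichoose_eq]
      have e : Nat.factorial 4 = 24 := rfl
      rw [e] at this
      rw [← this]
      simp [Nat.ascFactorial_succ]
      ring
    simp only [zero_add]
    obtain ⟨e, rfl⟩ : ∃ e, m = e + 2 := ⟨m - 2, by omega⟩
    have : 24 * (2 * Nat.multichoose (e + 2) 4 + 1) ≤ 24 * (e + 2) ^ 4 := by
      have : 24 * (2 * Nat.multichoose (e + 2) 4 + 1)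
        = 2 * (24 * Nat.multichoose (e + 2) 4) + 24 := by ring
      rw [this, h]
      ring_nf
      nlinarith [Nat.zero_le e, Nat.zero_le (e ^ 2), Nat.zero_le (e ^ 3), Nat.zero_le (e ^ 4)]
    omega
  | succ n ih =>
    have h := multichoose_step m (n + 4) (by omega)
    have e : n + 1 + 4 = n + 4 + 1 := by omega
    rw [e, pow_succ]
    have := Nat.mul_le_mul_right m ih
    nlinarith

open Classical in
/-- The code of an extremal matrix. -/
noncomputable def codeOf (d : ℕ) (hd : 4 ≤ d) (A : {A : (Fin d → Fin 2) → Bool // IsExtremal A}) :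
    Option (Sym (Fin (2 ^ (d - 3))) d × Fin 2) :=
  if h : ∃ i, maxRate A.1 i = 2 ^ (d - 1) then none
  else some (⟨(Finset.univ : Finset (Fin d)).val.map (fun i =>
      (⟨(maxRate A.1 i - 2 ^ (d - 2)) / 2,
        (code_lt hd A.1 (halving_of_extremal (by omega) A.1 A.2) h i).1⟩ : Fin (2 ^ (d - 3)))),
      by simp⟩, ⟨maxRate A.1 ⟨0, by omega⟩ % 2, Nat.mod_lt _ (by omega)⟩)

lemma equiv_of_codeOf (d : ℕ) (hd : 4 ≤ d) (A B : {A : (Fin d → Fin 2) → Bool // IsExtremal A})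
    (h : codeOf d hd A = codeOf d hd B) : MatEquiv A.1 B.1 := by
  have hA := halving_of_extremal (by omega) A.1 A.2
  have hB := halving_of_extremal (by omega) B.1 B.2
  unfold codeOf at h
  split_ifs at h with h1 h2 h2
  · obtain ⟨i, hi⟩ := h1
    obtain ⟨i', hi'⟩ := h2
    obtain ⟨j, hj⟩ := exists_dictator (by omega) A.1 hA i hi
    obtain ⟨j', hj'⟩ := exists_dictator (by omega) B.1 hB i' hi'
    exact equiv_of_dictator A.1 B.1 i i' j j' hj hj'
  · have h := Option.some_injective _ h
    have hs := congrArg Prod.fst h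
    have hp := congrArg Prod.snd h
    have hs' := congrArg Subtype.val hs
    dsimp only at hs'
    obtain ⟨π, hπ⟩ := exists_perm_of_map_eq _ _ hs'
    have hp' := congrArg Fin.val hp
    dsimp only at hp'
    apply equiv_of_maxRate (by omega) A.1 B.1 hA hB B.2.1 π.symm
    intro i
    have q := congrArg Fin.val (congrFun hπ (π.symm i))
    simp only [Function.comp, Equiv.apply_symm_apply] at q
    have p1 := maxRate_parity (by omega) A.1 hA (π.symm i) ⟨0, by omega⟩
    have p2 := maxRate_parity (by omega) B.1 hB i ⟨0, by omega⟩
    have b1 := (code_lt hd A.1 hA h1 (π.symm i)).2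
    have b2 := (code_lt hd B.1 hB h2 i).2
    have e4 : 2 ^ (d - 2) = 2 ^ (d - 3) * 2 := by
      rw [← pow_succ]; congr 1; omega
    rw [e4] at q b1 b2
    omega

/-- The number of equivalence classes of d-dimensional extremal matrices of order 2 is at
most 2^(d(d-3)). -/
theorem stmt_11 (d : ℕ) (hd : 4 ≤ d) :
    Nat.card (Quot (fun A B : {A : (Fin d → Fin 2) → Bool // IsExtremal A} =>
      MatEquiv A.1 B.1)) ≤ 2 ^ (d * (d - 3)) := by
  have hinj : Function.Injective (fun q : Quot (fun A B :
      {A : (Fin d → Fin 2) → Bool // IsExtremal A} => MatEquiv A.1 B.1) =>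
      codeOf d hd q.out) := by
    intro p q h
    have := equiv_of_codeOf d hd _ _ h
    rw [← Quot.out_eq p, ← Quot.out_eq q]
    exact Quot.sound this
  refine (Nat.card_le_card_of_injective _ hinj).trans ?_
  rw [Nat.card_eq_fintype_card, Fintype.card_option, Fintype.card_prod,
    Sym.card_sym_eq_multichoose, Fintype.card_fin, Fintype.card_fin, mul_comm d, pow_mul]
  have hm : 2 ≤ 2 ^ (d - 3) := by
    calc 2 = 2 ^ 1 := rfl
      _ ≤ 2 ^ (d - 3) := Nat.pow_le_pow_right (by omega) (by omega)
  have := multichoose_bound (2 ^ (d - 3)) (d - 4) hm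
  have e : d - 4 + 4 = d := by omega
  rw [e] at this
  omega
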